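/- Let t > 0, m ≥ 2, and B > 1 an integer such that ₀F₁(;m/2; t²) > e^{2t}/B. Then for any points u₁, …, u_B ∈ S^{m−1}, the off-diagonal empirical uniformity quantity satisfies log( (1/(B(B−1))) Σ_{i≠j} e^{−t‖u_i − u_j‖₂²} ) > log( (B·e^{−2t}·₀F₁(;m/2; t²) − 1)/(B−1) ). -/

import Mathlib

open MeasureTheory Real Filter Metric
open scoped RealInnerProductSpace ENNReal Topology BigOperators

noncomputable section

/-- `ℝ^n` as a Euclidean space. -/
abbrev Euc (n : ℕ) : Type := EuclideanSpace ℝ (Fin n)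

/-- The unit sphere in `ℝ^m`; the sphere `S^d` of the informal statement is `Sph (d+1)`. -/
abbrev Sph (m : ℕ) := Metric.sphere (0 : Euc m) 1

/-- The uniform (normalized surface-area) probability measure on the unit sphere of `ℝ^m`. -/
noncomputable def unifSphere (m : ℕ) : Measure (Sph m) :=
  ((volume : Measure (Euc m)).toSphere Set.univ)⁻¹ • (volume : Measure (Euc m)).toSphere

/-- Confluent hypergeometric limit function `₀F₁(; α; z) = Σ_n zⁿ/((α)_n n!)`. -/
noncomputable def hyp0F1 (α z : ℝ) : ℝ :=
  ∑' k : ℕ, z ^ k / ((ascPochhammer ℝ k).eval α * (Nat.factorial k : ℝ))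

/-!
On the sphere `‖x - y‖² = 2 - 2⟪x, y⟫`, so everything reduces to
`∑ i j, exp (2t⟪uᵢ, uⱼ⟫) > B² ₀F₁(; m/2; t²)`. Expand the exponential. Each power sum
`∑ i j, ⟪uᵢ, uⱼ⟫ⁿ` is nonnegative, being `∑ r, (n choose r) (∑ i, uᵢ^r)²` over multi-indices `r` by
the multinomial theorem, so the odd terms may be dropped. In degree `2k`, keep only the even
multi-indices `2r` and apply Cauchy–Schwarz against `‖uᵢ‖^(2k) = ∑ r, (k choose r) uᵢ^(2r)`: the
multinomial theorem for rising factorials evaluates the remaining constant and yields the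
Welch-type bound `∑ i j, ⟪uᵢ, uⱼ⟫^(2k) ≥ B² (1/2)ₖ / (m/2)ₖ`. Weighted by `(2t)^(2k) / (2k)!`, its
right-hand side is exactly `B²` times the `k`-th term of `₀F₁(; m/2; t²)`. The inequality is strict
because `(1/2)ₖ / (m/2)ₖ → 0` when `m ≥ 2`, whereas the diagonal `i = j` alone contributes `B`.
-/

open Finset Polynomial
open scoped Nat

section RisingFactorial

theorem ascPochhammer_eval_add {R : Type*} [CommSemiring R] (x y : R) (n : ℕ) :
    (ascPochhammer R n).eval (x + y) = ∑ ij ∈ antidiagonal n,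
      (n.choose ij.1 : R) * ((ascPochhammer R ij.1).eval x * (ascPochhammer R ij.2).eval y) := by
  induction n with
  | zero => simp
  | succ n ih =>
    rw [ascPochhammer_succ_eval, ih, sum_mul, sum_antidiagonal_choose_succ_mul
      (fun i j ↦ (ascPochhammer R i).eval x * (ascPochhammer R j).eval y), ← sum_add_distrib]
    refine sum_congr rfl fun ij hij ↦ ?_
    rw [HasAntidiagonal.mem_antidiagonal] at hij
    rw [ascPochhammer_succ_eval, ascPochhammer_succ_eval,
      ← Nat.choose_symm_of_eq_add hij.symm, ← hij]
    push_cast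
    ring

theorem ascPochhammer_eval_sum {R α : Type*} [CommSemiring R] [DecidableEq α]
    (s : Finset α) (x : α → R) (n : ℕ) :
    (ascPochhammer R n).eval (∑ a ∈ s, x a) = ∑ r ∈ piAntidiag s n,
      (Nat.multinomial s r : R) * ∏ a ∈ s, (ascPochhammer R (r a)).eval (x a) := by
  induction s using Finset.cons_induction generalizing n with
  | empty => cases n <;> simp [ascPochhammer_ne_zero_eval_zero]
  | cons a s ha ih =>
    rw [sum_cons, ascPochhammer_eval_add, piAntidiag_cons, sum_disjiUnion]
    refine sum_congr rfl fun ij hij ↦ ?_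
    rw [sum_map, ih, mul_sum, mul_sum]
    refine sum_congr rfl fun r hr ↦ ?_
    rw [mem_piAntidiag] at hr
    rw [HasAntidiagonal.mem_antidiagonal] at hij
    set r' : α → ℕ := addRightEmbedding (fun t ↦ if t = a then ij.1 else 0) r with hr'
    have r'_self : r' a = ij.1 := by simp [hr', not_imp_comm.1 (hr.2 a) ha]
    have r'_of_mem : ∀ b ∈ s, r' b = r b := fun b hb ↦ by
      simp [hr', ne_of_mem_of_not_mem hb ha]
    have prod_r' : ∏ b ∈ s, (ascPochhammer R (r' b)).eval (x b) =
        ∏ b ∈ s, (ascPochhammer R (r b)).eval (x b) :=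
      prod_congr rfl fun b hb ↦ by rw [r'_of_mem b hb]
    rw [Nat.multinomial_cons, prod_cons, Nat.multinomial_congr r'_of_mem, r'_self,
      sum_congr rfl r'_of_mem, hr.1, hij, prod_r']
    push_cast
    ring

theorem factorial_two_mul_eq_ascPochhammer_half {K : Type*} [Field K] [CharZero K] (n : ℕ) :
    ((2 * n)! : K) = 4 ^ n * n ! * (ascPochhammer K n).eval (1 / 2) := by
  induction n with
  | zero => simp
  | succ n ih =>
    rw [show 2 * (n + 1) = 2 * n + 1 + 1 by ring, Nat.factorial_succ, Nat.factorial_succ,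
      Nat.factorial_succ, ascPochhammer_succ_eval]
    push_cast
    rw [ih]
    field_simp
    ring

theorem multinomial_two_nsmul_mul_prod_ascPochhammer_half {α K : Type*} [Field K] [CharZero K]
    (s : Finset α) (r : α → ℕ) :
    (Nat.multinomial s (2 • r) : K) * ∏ a ∈ s, (ascPochhammer K (r a)).eval (1 / 2) =
      Nat.multinomial s r * (ascPochhammer K (∑ a ∈ s, r a)).eval (1 / 2) := by
  have spec : (∏ a ∈ s, ((r a)! : K)) * Nat.multinomial s r = (∑ a ∈ s, r a)! := by
    exact_mod_cast Nat.multinomial_spec s r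
  have spec_two : (∏ a ∈ s, (4 ^ r a * (r a)! * (ascPochhammer K (r a)).eval (1 / 2))) *
      Nat.multinomial s (2 • r) = (2 * ∑ a ∈ s, r a)! := by
    simp only [← factorial_two_mul_eq_ascPochhammer_half, mul_sum]
    exact_mod_cast Nat.multinomial_spec s (2 • r)
  rw [factorial_two_mul_eq_ascPochhammer_half, ← spec, prod_mul_distrib, prod_mul_distrib,
    prod_pow_eq_pow_sum] at spec_two
  have prod_ne_zero : (4 : K) ^ (∑ a ∈ s, r a) * ∏ a ∈ s, ((r a)! : K) ≠ 0 :=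
    mul_ne_zero (pow_ne_zero _ (by norm_num))
      (prod_ne_zero_iff.2 fun a _ ↦ Nat.cast_ne_zero.2 (r a).factorial_ne_zero)
  refine mul_left_cancel₀ prod_ne_zero ?_
  linear_combination spec_two

end RisingFactorial

/-- The ratio `(1/2)ₖ / (α)ₖ` of rising factorials. For `α = m / 2` it is the `2k`-th moment of a
coordinate of a uniformly random point of the unit sphere of `ℝ^m`. -/
def sphereMoment (α : ℝ) (k : ℕ) : ℝ :=
  (ascPochhammer ℝ k).eval (1 / 2) / (ascPochhammer ℝ k).eval α

section SphereMoment

theorem ascPochhammer_half_pos (k : ℕ) : 0 < (ascPochhammer ℝ k).eval (1 / 2) :=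
  ascPochhammer_pos k _ one_half_pos

theorem sphereMoment_pos {α : ℝ} (hα : 0 < α) (k : ℕ) : 0 < sphereMoment α k :=
  div_pos (ascPochhammer_half_pos k) (ascPochhammer_pos k α hα)

theorem sq_sphereMoment_le {α : ℝ} (hα : 1 ≤ α) (k : ℕ) :
    sphereMoment α k ^ 2 ≤ 1 / (2 * k + 1) := by
  induction k with
  | zero => simp [sphereMoment]
  | succ k ih =>
    calc sphereMoment α (k + 1) ^ 2
        = sphereMoment α k ^ 2 * ((1 / 2 + k) / (α + k)) ^ 2 := by
          rw [sphereMoment, ascPochhammer_succ_eval, ascPochhammer_succ_eval, mul_div_mul_comm,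
            mul_pow, sphereMoment]
      _ ≤ 1 / (2 * (k : ℝ) + 1) * ((1 / 2 + k) / (1 + k)) ^ 2 := by gcongr
      _ = (2 * k + 1) / (2 * k + 2) ^ 2 := by field_simp; ring
      _ ≤ 1 / (2 * (k + 1 : ℕ) + 1) := by
        rw [div_le_div_iff₀ (by positivity) (by positivity)]
        push_cast
        nlinarith

theorem hyp0F1_sq_eq_tsum_sphereMoment (α t : ℝ) :
    hyp0F1 α (t ^ 2) = ∑' k, (2 * t) ^ (2 * k) / (2 * k)! * sphereMoment α k := by
  refine tsum_congr fun k ↦ ?_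
  have half_ne_zero := (ascPochhammer_half_pos k).ne'
  have sq_two_mul : (2 * t) ^ 2 = 4 * t ^ 2 := by ring
  rw [sphereMoment, factorial_two_mul_eq_ascPochhammer_half, pow_mul, sq_two_mul, mul_pow]
  field_simp

end SphereMoment

/-- The `n`-th frame potential `∑ i j, ⟪u i, u j⟫ ^ n` of a finite family of vectors. -/
def framePotential {ι E : Type*} [Fintype ι] [NormedAddCommGroup E] [InnerProductSpace ℝ E]
    (u : ι → E) (n : ℕ) : ℝ :=
  ∑ i, ∑ j, ⟪u i, u j⟫ ^ n

section InnerProductSpace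

variable {ι E : Type*} [Fintype ι] [NormedAddCommGroup E] [InnerProductSpace ℝ E]

theorem card_le_framePotential_of_even (u : ι → E) (hu : ∀ i, ‖u i‖ = 1) {n : ℕ} (hn : Even n) :
    Fintype.card ι ≤ framePotential u n := by
  have one_le (i : ι) : 1 ≤ ∑ j, ⟪u i, u j⟫ ^ n :=
    calc 1 = ⟪u i, u i⟫ ^ n := by simp [hu]
      _ ≤ ∑ j, ⟪u i, u j⟫ ^ n :=
        single_le_sum (f := fun j ↦ ⟪u i, u j⟫ ^ n) (fun j _ ↦ hn.pow_nonneg _) (mem_univ i)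
  calc (Fintype.card ι : ℝ) = ∑ _i : ι, 1 := by simp
    _ ≤ framePotential u n := sum_le_sum fun i _ ↦ one_le i

theorem hasSum_framePotential (u : ι → E) (c : ℝ) :
    HasSum (fun n ↦ c ^ n / n ! * framePotential u n) (∑ i, ∑ j, exp (c * ⟪u i, u j⟫)) := by
  have term_eq : (fun n : ℕ ↦ c ^ n / n ! * framePotential u n) =
      fun n ↦ ∑ i, ∑ j, (c * ⟪u i, u j⟫) ^ n / n ! := by
    funext n
    simp only [framePotential, mul_sum, mul_pow, div_mul_eq_mul_div]
  rw [term_eq, Real.exp_eq_exp_ℝ]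
  exact hasSum_sum fun i _ ↦ hasSum_sum fun j _ ↦ NormedSpace.expSeries_div_hasSum_exp _

theorem sum_offDiag_exp_neg_mul_norm_sub_sq [DecidableEq ι] (u : ι → E) (hu : ∀ i, ‖u i‖ = 1)
    (t : ℝ) :
    (∑ i, ∑ j, if i ≠ j then exp (-t * ‖u i - u j‖ ^ 2) else 0) =
      exp (-2 * t) * ∑ i, ∑ j, exp (2 * t * ⟪u i, u j⟫) - Fintype.card ι := by
  have exp_eq (i j : ι) :
      exp (-t * ‖u i - u j‖ ^ 2) = exp (-2 * t) * exp (2 * t * ⟪u i, u j⟫) := by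
    rw [← Real.exp_add, norm_sub_sq_real, hu, hu]
    ring_nf
  have ite_eq (i j : ι) : (if i ≠ j then exp (-t * ‖u i - u j‖ ^ 2) else 0) =
      exp (-2 * t) * exp (2 * t * ⟪u i, u j⟫) - if i = j then 1 else 0 := by
    rw [← exp_eq]
    by_cases hij : i = j <;> simp [hij]
  simp only [ite_eq, sum_sub_distrib, ← mul_sum]
  simp

end InnerProductSpace

section EuclideanSpace

variable {ι σ : Type*} [Fintype ι] [Fintype σ]

theorem framePotential_eq_sum_multinomial_mul_sq [DecidableEq σ]
    (u : ι → EuclideanSpace ℝ σ) (n : ℕ) :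
    framePotential u n = ∑ r ∈ piAntidiag univ n,
      (Nat.multinomial univ r : ℝ) * (∑ i, ∏ a, u i a ^ r a) ^ 2 := by
  have inner_pow (i j : ι) : ⟪u i, u j⟫ ^ n = ∑ r ∈ piAntidiag univ n,
      (Nat.multinomial univ r : ℝ) * ((∏ a, u i a ^ r a) * ∏ a, u j a ^ r a) := by
    simp only [PiLp.inner_apply, RCLike.inner_apply, conj_trivial, sum_pow_eq_sum_piAntidiag,
      mul_pow, prod_mul_distrib, mul_comm]
  have moment_sq (r : σ → ℕ) : (∑ i, ∏ a, u i a ^ r a) ^ 2 =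
      ∑ i, ∑ j, (∏ a, u i a ^ r a) * ∏ a, u j a ^ r a := by
    rw [sq, sum_mul_sum]
  simp only [framePotential, inner_pow, moment_sq, mul_sum]
  rw [sum_comm (s := piAntidiag univ n)]
  exact sum_congr rfl fun i _ ↦ sum_comm

theorem framePotential_nonneg (u : ι → EuclideanSpace ℝ σ) (n : ℕ) : 0 ≤ framePotential u n := by
  classical
  rw [framePotential_eq_sum_multinomial_mul_sq]
  positivity

theorem norm_pow_two_mul_eq_sum_multinomial [DecidableEq σ] (x : EuclideanSpace ℝ σ) (k : ℕ) :
    ‖x‖ ^ (2 * k) = ∑ r ∈ piAntidiag univ k,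
      (Nat.multinomial univ r : ℝ) * ∏ a, x a ^ (2 • r) a := by
  simp only [pow_mul, EuclideanSpace.real_norm_sq_eq, sum_pow_eq_sum_piAntidiag, Pi.smul_apply,
    smul_eq_mul]

theorem sum_multinomial_two_nsmul_mul_sq_le_framePotential [DecidableEq σ]
    (u : ι → EuclideanSpace ℝ σ) (k : ℕ) :
    ∑ r ∈ piAntidiag univ k,
      (Nat.multinomial univ (2 • r) : ℝ) * (∑ i, ∏ a, u i a ^ (2 • r) a) ^ 2 ≤
        framePotential u (2 * k) := by
  rw [framePotential_eq_sum_multinomial_mul_sq]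
  calc _ = ∑ r ∈ piAntidiag univ (2 * k) with ∀ a, 2 ∣ r a,
        (Nat.multinomial univ r : ℝ) * (∑ i, ∏ a, u i a ^ r a) ^ 2 := by
        rw [← map_nsmul_piAntidiag_univ k two_ne_zero, sum_map]; rfl
    _ ≤ _ := sum_le_sum_of_subset_of_nonneg (filter_subset _ _) fun r _ _ ↦ by positivity

theorem sq_sum_multinomial_mul_le [DecidableEq σ] (k : ℕ) (M : (σ → ℕ) → ℝ) :
    (∑ r ∈ piAntidiag univ k, (Nat.multinomial univ r : ℝ) * M r) ^ 2 *
      sphereMoment (Fintype.card σ / 2) k ≤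
        ∑ r ∈ piAntidiag univ k, (Nat.multinomial univ (2 • r) : ℝ) * M r ^ 2 := by
  set weight : (σ → ℕ) → ℝ :=
    fun r ↦ Nat.multinomial univ r * ∏ a, (ascPochhammer ℝ (r a)).eval (1 / 2)
  have weight_pos (r : σ → ℕ) : 0 < weight r :=
    mul_pos (mod_cast Nat.multinomial_pos _ _) (prod_pos fun a _ ↦ ascPochhammer_half_pos (r a))
  have sum_weight : ∑ r ∈ piAntidiag univ k, weight r =
      (ascPochhammer ℝ k).eval (Fintype.card σ / 2 : ℝ) := by
    rw [← ascPochhammer_eval_sum]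
    simp [div_eq_mul_inv]
  have sq_div_weight (r : σ → ℕ) (hr : r ∈ piAntidiag univ k) :
      (Nat.multinomial univ r * M r) ^ 2 / weight r * (ascPochhammer ℝ k).eval (1 / 2) =
        Nat.multinomial univ (2 • r) * M r ^ 2 := by
    have multinomial_two := multinomial_two_nsmul_mul_prod_ascPochhammer_half (K := ℝ) univ r
    rw [(mem_piAntidiag.1 hr).1] at multinomial_two
    rw [div_mul_eq_mul_div, div_eq_iff (weight_pos r).ne']
    linear_combination -(Nat.multinomial univ r : ℝ) * M r ^ 2 * multinomial_two
  calc _ = (∑ r ∈ piAntidiag univ k, (Nat.multinomial univ r : ℝ) * M r) ^ 2 /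
          (∑ r ∈ piAntidiag univ k, weight r) * (ascPochhammer ℝ k).eval (1 / 2) := by
        rw [sum_weight, sphereMoment]; ring
    _ ≤ (∑ r ∈ piAntidiag univ k, (Nat.multinomial univ r * M r) ^ 2 / weight r) *
          (ascPochhammer ℝ k).eval (1 / 2) := by
        gcongr
        · exact (ascPochhammer_half_pos k).le
        · exact sq_sum_div_le_sum_sq_div _ _ fun r _ ↦ weight_pos r
    _ = _ := by rw [sum_mul, sum_congr rfl sq_div_weight]

theorem sq_sum_norm_pow_mul_le_framePotential (u : ι → EuclideanSpace ℝ σ) (k : ℕ) :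
    (∑ i, ‖u i‖ ^ (2 * k)) ^ 2 * sphereMoment (Fintype.card σ / 2) k ≤
      framePotential u (2 * k) := by
  classical
  simp only [norm_pow_two_mul_eq_sum_multinomial]
  rw [sum_comm]
  simp only [← mul_sum]
  exact (sq_sum_multinomial_mul_le k _).trans
    (sum_multinomial_two_nsmul_mul_sq_le_framePotential u k)

theorem exists_sq_card_mul_lt_framePotential [Nonempty ι] (hσ : 2 ≤ Fintype.card σ)
    (u : ι → EuclideanSpace ℝ σ) (hu : ∀ i, ‖u i‖ = 1) :
    ∃ k, (Fintype.card ι : ℝ) ^ 2 * sphereMoment (Fintype.card σ / 2) k <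
      framePotential u (2 * k) := by
  set N : ℕ := Fintype.card ι
  have N_pos : (0 : ℝ) < N := mod_cast Fintype.card_pos
  have one_le_half_card : 1 ≤ (Fintype.card σ / 2 : ℝ) := by
    rw [le_div_iff₀ two_pos, one_mul]
    exact_mod_cast hσ
  have sphereMoment_lt : sphereMoment (Fintype.card σ / 2) (N ^ 2) < 1 / N := by
    refine lt_of_pow_lt_pow_left₀ 2 (by positivity)
      ((sq_sphereMoment_le one_le_half_card _).trans_lt ?_)
    rw [div_pow, one_pow]
    refine one_div_lt_one_div_of_lt (by positivity) ?_
    push_cast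
    linarith [sq_nonneg (N : ℝ)]
  -- `sphereMoment` is `O(k ^ (-1/2))`, so `k = N ^ 2` brings the bound below the diagonal sum.
  refine ⟨N ^ 2, ?_⟩
  calc _ < (N : ℝ) ^ 2 * (1 / N) := by gcongr
    _ = N := by field_simp
    _ ≤ _ := card_le_framePotential_of_even u hu (even_two_mul _)

theorem sq_card_mul_hyp0F1_lt_sum_exp_inner [Nonempty ι] (hσ : 2 ≤ Fintype.card σ)
    (u : ι → EuclideanSpace ℝ σ) (hu : ∀ i, ‖u i‖ = 1) {t : ℝ} (ht : 0 < t) :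
    (Fintype.card ι : ℝ) ^ 2 * hyp0F1 (Fintype.card σ / 2) (t ^ 2) <
      ∑ i, ∑ j, exp (2 * t * ⟪u i, u j⟫) := by
  set lower : ℕ → ℝ := fun k ↦
    (2 * t) ^ (2 * k) / (2 * k)! * ((Fintype.card ι : ℝ) ^ 2 * sphereMoment (Fintype.card σ / 2) k)
  set expTerm : ℕ → ℝ := fun n ↦ (2 * t) ^ n / n ! * framePotential u n
  have exp_hasSum : HasSum expTerm (∑ i, ∑ j, exp (2 * t * ⟪u i, u j⟫)) :=
    hasSum_framePotential u (2 * t)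
  have expTerm_nonneg (n : ℕ) : 0 ≤ expTerm n :=
    mul_nonneg (by positivity) (framePotential_nonneg u n)
  have two_mul_injective : Function.Injective (2 * · : ℕ → ℕ) := mul_right_injective₀ two_ne_zero
  have even_summable : Summable fun k ↦ expTerm (2 * k) :=
    exp_hasSum.summable.comp_injective two_mul_injective
  have lower_nonneg (k : ℕ) : 0 ≤ lower k :=
    have := sphereMoment_pos (α := Fintype.card σ / 2) (by positivity) k
    by positivity
  have lower_le (k : ℕ) : lower k ≤ expTerm (2 * k) := by
    have welch := sq_sum_norm_pow_mul_le_framePotential u k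
    simp only [hu, one_pow, sum_const, card_univ, nsmul_eq_mul, mul_one] at welch
    exact mul_le_mul_of_nonneg_left welch (by positivity)
  obtain ⟨k₀, welch_strict⟩ := exists_sq_card_mul_lt_framePotential hσ u hu
  have lower_lt : lower k₀ < expTerm (2 * k₀) := mul_lt_mul_of_pos_left welch_strict (by positivity)
  calc (Fintype.card ι : ℝ) ^ 2 * hyp0F1 (Fintype.card σ / 2) (t ^ 2)
      = ∑' k, lower k := by
        simp only [hyp0F1_sq_eq_tsum_sphereMoment, ← tsum_mul_left, mul_left_comm, lower]
    _ < ∑' k, expTerm (2 * k) :=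
        Summable.tsum_lt_tsum lower_le lower_lt
          (.of_nonneg_of_le lower_nonneg lower_le even_summable) even_summable
    _ ≤ ∑' n, expTerm n :=
        tsum_comp_le_tsum_of_inj exp_hasSum.summable expTerm_nonneg two_mul_injective
    _ = ∑ i, ∑ j, exp (2 * t * ⟪u i, u j⟫) := exp_hasSum.tsum_eq

end EuclideanSpace

/-- Strict lower bound for the off-diagonal empirical uniformity quantity:
if `₀F₁(;m/2;t²) > e^{2t}/B` then for any `B > 1` points on the unit sphere of `ℝ^m`,
`log((1/(B(B−1))) Σ_{i≠j} e^{−t‖u_i−u_j‖²}) > log((B e^{−2t} ₀F₁(;m/2;t²) − 1)/(B−1))`. -/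
theorem empirical_offdiag_unif_gt (t : ℝ) (ht : 0 < t) {m B : ℕ} (hm : 2 ≤ m) (hB : 1 < B)
    (hF : hyp0F1 ((m : ℝ) / 2) (t ^ 2) > Real.exp (2 * t) / (B : ℝ))
    (u : Fin B → Sph m) :
    Real.log ((1 / ((B : ℝ) * ((B : ℝ) - 1))) *
        ∑ i : Fin B, ∑ j : Fin B,
          if i ≠ j then Real.exp (-t * ‖(u i : Euc m) - (u j : Euc m)‖ ^ 2) else 0) >
      Real.log (((B : ℝ) * Real.exp (-2 * t) * hyp0F1 ((m : ℝ) / 2) (t ^ 2) - 1) / ((B : ℝ) - 1)) := by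
  have unit (i : Fin B) : ‖(u i : Euc m)‖ = 1 := norm_eq_of_mem_sphere (u i)
  have : Nonempty (Fin B) := ⟨0, by omega⟩
  have one_lt_B : (1 : ℝ) < B := mod_cast hB
  have exp_sum_gt := sq_card_mul_hyp0F1_lt_sum_exp_inner (by simpa using hm) _ unit ht
  simp only [Fintype.card_fin] at exp_sum_gt
  rw [sum_offDiag_exp_neg_mul_norm_sub_sq _ unit, Fintype.card_fin]
  refine Real.log_lt_log (div_pos ?_ (by linarith)) ?_
  · rw [gt_iff_lt, div_lt_iff₀' (by linarith)] at hF
    rw [sub_pos, mul_right_comm, neg_mul, Real.exp_neg, ← div_eq_mul_inv, one_lt_div (exp_pos _)]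
    exact hF
  · rw [one_div_mul_eq_div, ← div_div]
    refine div_lt_div_of_pos_right ?_ (by linarith)
    rw [lt_div_iff₀ (by linarith)]
    have scaled := mul_lt_mul_of_pos_left exp_sum_gt (exp_pos (-2 * t))
    linarith
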